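/- Let 0 ≤ α < 1, let μ ≤ (1−α)²/4, set ν = (2/(2−α))·√((1−α)²/4 − μ), and let j > 0. Define Φ(x) = x^{(1−α)/2} · J_ν(j · x^{(2−α)/2}) for x ∈ (0,1). Then Φ is twice differentiable on (0,1), the function x ↦ x^α Φ′(x) is differentiable on (0,1), and for all x ∈ (0,1) one has −(d/dx)(x^α Φ′(x)) − (μ / x^{2−α}) Φ(x) = ((2−α)/2)² · j² · Φ(x). -/

import Mathlib

/-- The Bessel function of the first kind of order `ν`, defined by its power series:
`J_ν(x) = ∑_{m=0}^∞ ((-1)^m / (m! Γ(m+ν+1))) (x/2)^(2m+ν)`. -/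
noncomputable def besselJ (ν : ℝ) (x : ℝ) : ℝ :=
  ∑' m : ℕ, ((-1 : ℝ) ^ m / ((m.factorial : ℝ) * Real.Gamma ((m : ℝ) + ν + 1))) *
    (x / 2) ^ (2 * (m : ℝ) + ν)

/-- Coefficients of the reduced Bessel series. -/
noncomputable def besC (ν : ℝ) (m : ℕ) : ℝ :=
  (-1 : ℝ) ^ m / ((m.factorial : ℝ) * Real.Gamma ((m : ℝ) + ν + 1))

/-- The entire function with coefficients `besC`. -/
noncomputable def besG (ν t : ℝ) : ℝ := ∑' m : ℕ, besC ν m * t ^ m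

lemma gamma_lower (ν : ℝ) (hν : 0 ≤ ν) (m : ℕ) :
    Real.Gamma (ν + 1) ≤ Real.Gamma ((m : ℝ) + ν + 1) := by
  induction m with
  | zero => simp
  | succ k ih =>
    have hk : (0 : ℝ) ≤ k := Nat.cast_nonneg k
    have h : ((k + 1 : ℕ) : ℝ) + ν + 1 = ((k : ℝ) + ν + 1) + 1 := by push_cast; ring
    rw [h, Real.Gamma_add_one (s := (k : ℝ) + ν + 1) (by positivity)]
    have := Real.Gamma_pos_of_pos (show 0 < (k : ℝ) + ν + 1 by positivity)
    nlinarith [mul_nonneg (add_nonneg hk hν) this.le]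

lemma besC_bound (ν : ℝ) (hν : 0 ≤ ν) (m : ℕ) :
    |besC ν m| ≤ (Real.Gamma (ν + 1))⁻¹ * (1 / (m.factorial : ℝ)) := by
  have h0 := Real.Gamma_pos_of_pos (show 0 < ν + 1 by positivity)
  have h1 := gamma_lower ν hν m
  have hf : (0 : ℝ) < m.factorial := by positivity
  unfold besC
  rw [abs_div, abs_pow, abs_neg, abs_one, one_pow, abs_of_pos (mul_pos hf (h0.trans_le h1))]
  rw [one_div, mul_inv, one_div, mul_comm]
  gcongr

lemma besG_summable (ν : ℝ) (hν : 0 ≤ ν) (t : ℝ) : Summable fun m : ℕ => besC ν m * t ^ m := by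
  refine Summable.of_norm_bounded
    ((Real.summable_pow_div_factorial |t|).mul_left (Real.Gamma (ν + 1))⁻¹) fun m => ?_
  rw [Real.norm_eq_abs, abs_mul, abs_pow]
  calc _ ≤ (Real.Gamma (ν + 1))⁻¹ * (1 / (m.factorial : ℝ)) * |t| ^ m := by
        gcongr; exact besC_bound ν hν m
    _ = _ := by ring

lemma besC_succ (ν : ℝ) (m : ℕ) : besC ν (m + 1) * ((m + 1 : ℕ) : ℝ) = - besC (ν + 1) m := by
  unfold besC
  have e : ((m + 1 : ℕ) : ℝ) + ν + 1 = (m : ℝ) + (ν + 1) + 1 := by push_cast; ring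
  have hm : ((m + 1 : ℕ) : ℝ) ≠ 0 := by positivity
  rw [e, Nat.factorial_succ, pow_succ, Nat.cast_mul, mul_assoc, div_mul_eq_mul_div,
    mul_comm _ ((m + 1 : ℕ) : ℝ), mul_div_mul_left _ _ hm]
  ring

lemma besC_shift (ν : ℝ) (hν : 0 ≤ ν) (m : ℕ) :
    besC ν m = ((m : ℝ) + ν + 1) * besC (ν + 1) m := by
  unfold besC
  have hk : (0 : ℝ) ≤ m := Nat.cast_nonneg m
  have hp : 0 < (m : ℝ) + ν + 1 := by positivity
  have := (Real.Gamma_pos_of_pos hp).ne'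
  have hf : (m.factorial : ℝ) ≠ 0 := by positivity
  rw [show (m : ℝ) + (ν + 1) + 1 = ((m : ℝ) + ν + 1) + 1 by ring, Real.Gamma_add_one hp.ne']
  have := hp.ne'
  field_simp

lemma besG_hasDerivAt (ν : ℝ) (hν : 0 ≤ ν) (t : ℝ) :
    HasDerivAt (besG ν) (- besG (ν + 1) t) t := by
  have key : HasDerivAt (fun z => ∑' m : ℕ, besC ν m * z ^ m)
      (∑' m : ℕ, besC ν m * ((m : ℝ) * t ^ (m - 1))) t := by
    refine hasDerivAt_tsum_of_isPreconnected (t := Metric.ball 0 (|t| + 1)) (y₀ := t)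
      (u := fun m : ℕ => (Real.Gamma (ν + 1))⁻¹ * (1 / (m.factorial : ℝ)) *
        ((m : ℝ) * (|t| + 1) ^ (m - 1))) ?_ Metric.isOpen_ball
      (convex_ball _ _).isPreconnected (fun m y _ => (hasDerivAt_pow m y).const_mul _) ?_ ?_
      (besG_summable ν hν t) ?_
    · rw [← summable_nat_add_iff 1]
      refine ((Real.summable_pow_div_factorial (|t| + 1)).mul_left
        (Real.Gamma (ν + 1))⁻¹).congr fun m => ?_
      have hm : ((m + 1 : ℕ) : ℝ) ≠ 0 := by positivity
      have hf : (m.factorial : ℝ) ≠ 0 := by positivity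
      rw [Nat.factorial_succ, Nat.add_sub_cancel, Nat.cast_mul]
      field_simp
    · intro m y hy
      have hy' : |y| ≤ |t| + 1 := by
        have := mem_ball_zero_iff.1 hy
        rw [Real.norm_eq_abs] at this
        exact this.le
      rw [Real.norm_eq_abs, abs_mul, abs_mul, abs_pow, Nat.abs_cast]
      have := Real.Gamma_pos_of_pos (show 0 < ν + 1 by positivity)
      gcongr
      exact besC_bound ν hν m
    all_goals
      rw [mem_ball_zero_iff, Real.norm_eq_abs]; linarith
  have e : (∑' m : ℕ, besC ν m * ((m : ℝ) * t ^ (m - 1))) = - besG (ν + 1) t := by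
    have hs : ∀ m : ℕ, besC ν (m + 1) * (((m + 1 : ℕ) : ℝ) * t ^ (m + 1 - 1)) =
        - (besC (ν + 1) m * t ^ m) := by
      intro m
      rw [← mul_assoc, besC_succ, Nat.add_sub_cancel]; ring
    have hS : Summable fun m : ℕ => besC ν m * ((m : ℝ) * t ^ (m - 1)) := by
      rw [← summable_nat_add_iff 1]
      exact (besG_summable (ν + 1) (by positivity) t).neg.congr fun m => (hs m).symm
    rw [hS.tsum_eq_zero_add]
    simp only [hs, tsum_neg]
    simp [besG]
  rw [e] at key
  exact key

lemma besG_ode (ν : ℝ) (hν : 0 ≤ ν) (t : ℝ) :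
    besG ν t = (ν + 1) * besG (ν + 1) t - t * besG (ν + 1 + 1) t := by
  have h0 := besG_summable ν hν t
  have h1 := besG_summable (ν + 1) (by positivity) t
  have h2 := besG_summable (ν + 1 + 1) (by positivity) t
  have hT : HasSum (fun m : ℕ => (m : ℝ) * besC (ν + 1) m * t ^ m)
      (- (t * besG (ν + 1 + 1) t)) := by
    rw [← hasSum_nat_add_iff' 1]
    have := (h2.hasSum.mul_left t).neg
    simp only [Finset.range_one, Finset.sum_singleton, Nat.cast_zero, zero_mul, sub_zero]
    refine this.congr_fun ?_ |> fun h => h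
    intro m
    rw [mul_comm ((m + 1 : ℕ) : ℝ), besC_succ]; ring
  have h3 := (h1.hasSum.mul_left (ν + 1)).add hT
  have h4 := h0.hasSum
  have : (fun m : ℕ => besC ν m * t ^ m) = fun m : ℕ =>
      (ν + 1) * (besC (ν + 1) m * t ^ m) + (m : ℝ) * besC (ν + 1) m * t ^ m := by
    funext m
    rw [besC_shift ν hν m]; ring
  rw [← this] at h3
  rw [sub_eq_add_neg]
  exact h4.unique h3

lemma besselJ_eq (ν y : ℝ) (hy : 0 < y) :
    besselJ ν y = (y / 2) ^ ν * besG ν ((y / 2) ^ 2) := by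
  unfold besselJ besG besC
  rw [← tsum_mul_left]
  refine tsum_congr fun m => ?_
  rw [Real.rpow_add (by positivity), Real.rpow_mul (by positivity), Real.rpow_natCast,
    Real.rpow_two]
  ring

/-- For `0 ≤ α < 1`, `μ ≤ (1-α)²/4`, `ν = (2/(2-α))√((1-α)²/4 - μ)` and `j > 0`,
the function `Φ(x) = x^((1-α)/2) J_ν(j x^((2-α)/2))` is twice differentiable on `(0,1)`,
`x ↦ x^α Φ'(x)` is differentiable on `(0,1)`, and
`-(x^α Φ')' - (μ/x^(2-α)) Φ = ((2-α)/2)² j² Φ` on `(0,1)`. -/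
theorem eigenfunction_equation (α μ ν j : ℝ) (hα0 : 0 ≤ α) (hα1 : α < 1)
    (hμ : μ ≤ (1 - α) ^ 2 / 4)
    (hν : ν = 2 / (2 - α) * Real.sqrt ((1 - α) ^ 2 / 4 - μ))
    (hj : 0 < j)
    (Φ : ℝ → ℝ)
    (hΦ : ∀ x, Φ x = x ^ ((1 - α) / 2) * besselJ ν (j * x ^ ((2 - α) / 2))) :
    (∀ x ∈ Set.Ioo (0 : ℝ) 1, DifferentiableAt ℝ Φ x) ∧
    (∀ x ∈ Set.Ioo (0 : ℝ) 1, DifferentiableAt ℝ (deriv Φ) x) ∧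
    (∀ x ∈ Set.Ioo (0 : ℝ) 1, DifferentiableAt ℝ (fun y => y ^ α * deriv Φ y) x) ∧
    (∀ x ∈ Set.Ioo (0 : ℝ) 1,
      -deriv (fun y => y ^ α * deriv Φ y) x - μ / x ^ (2 - α) * Φ x =
        ((2 - α) / 2) ^ 2 * j ^ 2 * Φ x) := by
  have hq : 0 < 2 - α := by linarith
  set s := Real.sqrt ((1 - α) ^ 2 / 4 - μ) with hs
  have hs0 : 0 ≤ s := Real.sqrt_nonneg _
  have hs2 : s ^ 2 = (1 - α) ^ 2 / 4 - μ := Real.sq_sqrt (by linarith)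
  have hν0 : 0 ≤ ν := by rw [hν]; positivity
  have hqν : (2 - α) * ν = 2 * s := by rw [hν]; field_simp
  set p := (1 - α) / 2 + s with hp
  set q := 2 - α with hqd
  set b := (j / 2) ^ 2 with hb
  set C := (j / 2) ^ ν with hC
  have form : ∀ x : ℝ, 0 < x → Φ x = C * (x ^ p * besG ν (b * x ^ q)) := by
    intro x hx
    have hx' : 0 < x ^ (q / 2) := Real.rpow_pos_of_pos hx _
    rw [hΦ, besselJ_eq _ _ (by positivity),
      show j * x ^ (q / 2) / 2 = (j / 2) * x ^ (q / 2) by ring,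
      Real.mul_rpow (by positivity) hx'.le, mul_pow, ← Real.rpow_mul hx.le,
      ← Real.rpow_two (x ^ (q / 2)), ← Real.rpow_mul hx.le,
      show q / 2 * 2 = q by ring, show q / 2 * ν = s by linarith, hp, Real.rpow_add hx]
    ring
  -- derivative of the argument
  have hin : ∀ x : ℝ, 0 < x → HasDerivAt (fun x : ℝ => b * x ^ q) (b * (q * x ^ (q - 1))) x :=
    fun x hx => (Real.hasDerivAt_rpow_const (Or.inl hx.ne')).const_mul b
  have hG : ∀ (n : ℝ), 0 ≤ n → ∀ x : ℝ, 0 < x → HasDerivAt (fun x : ℝ => besG n (b * x ^ q))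
      (- besG (n + 1) (b * x ^ q) * (b * (q * x ^ (q - 1)))) x :=
    fun n hn x hx => (besG_hasDerivAt n hn _).comp x (hin x hx)
  have hpw : ∀ (r : ℝ), ∀ x : ℝ, 0 < x → HasDerivAt (fun x : ℝ => x ^ r) (r * x ^ (r - 1)) x :=
    fun r x hx => Real.hasDerivAt_rpow_const (Or.inl hx.ne')
  have ev : ∀ x : ℝ, 0 < x → ∀ᶠ y in nhds x, 0 < y := fun x hx => lt_mem_nhds hx
  have d1 : ∀ x : ℝ, 0 < x → HasDerivAt Φ (C * (p * x ^ (p - 1) * besG ν (b * x ^ q) +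
      x ^ p * (- besG (ν + 1) (b * x ^ q) * (b * (q * x ^ (q - 1)))))) x := by
    intro x hx
    refine (((hpw p x hx).mul (hG ν hν0 x hx)).const_mul C).congr_of_eventuallyEq ?_
    filter_upwards [ev x hx] with y hy
    exact form y hy
  have d2 : ∀ x : ℝ, 0 < x → DifferentiableAt ℝ (deriv Φ) x := by
    intro x hx
    have h := ((((hpw (p - 1) x hx).const_mul p).mul (hG ν hν0 x hx)).add
      ((hpw p x hx).mul ((hG (ν + 1) (by positivity) x hx).neg.mul
        (((hpw (q - 1) x hx).const_mul q).const_mul b)))).const_mul C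
    refine (h.congr_of_eventuallyEq ?_).differentiableAt
    filter_upwards [ev x hx] with y hy
    exact (d1 y hy).deriv
  have d3 : ∀ x : ℝ, 0 < x → HasDerivAt (fun y => y ^ α * deriv Φ y)
      (C * (-μ * x ^ (p - 2 + α) * besG ν (b * x ^ q) -
        b * q ^ 2 * x ^ p * besG ν (b * x ^ q))) x := by
    intro x hx
    have h := ((((hpw (p - 1 + α) x hx).const_mul p).mul (hG ν hν0 x hx)).sub
      (((hpw (p + 1) x hx).const_mul (b * q)).mul (hG (ν + 1) (by positivity) x hx))).const_mul C
    refine (h.congr_of_eventuallyEq ?_).congr_deriv ?_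
    · filter_upwards [ev x hx] with y hy
      have e1 : y ^ (p - 1 + α) = y ^ (p - 1) * y ^ α := Real.rpow_add hy _ _
      have e2 : y ^ (p + 1) = y ^ p * y ^ α * y ^ (q - 1) := by
        rw [← Real.rpow_add hy, ← Real.rpow_add hy]; congr 1; rw [hqd]; ring
      simp only [(d1 y hy).deriv, Pi.mul_apply, Pi.sub_apply]
      rw [e1, e2]; ring
    · have e1 : x ^ p = x ^ (p - 1 + α) * x ^ (q - 1) := by
        rw [← Real.rpow_add hx]; congr 1; rw [hqd]; ring
      have e2 : x ^ (p + 1) * x ^ (q - 1) = x ^ p * x ^ q := by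
        rw [← Real.rpow_add hx, ← Real.rpow_add hx]; congr 1; ring
      have e3 : x ^ (p - 1 + α - 1) = x ^ (p - 2 + α) := by congr 1; ring
      have e4 : x ^ (p + 1 - 1) = x ^ p := by congr 1; ring
      have hμ' : μ = - (p * (p - 1 + α)) := by rw [hp]; nlinarith
      have ho := besG_ode ν hν0 (b * x ^ q)
      have h2p : 2 * p + 1 = q * (ν + 1) := by rw [hp]; linarith
      rw [e3, e4, hμ']
      set G0 := besG ν (b * x ^ q)
      set G1 := besG (ν + 1) (b * x ^ q)
      set G2 := besG (ν + 1 + 1) (b * x ^ q)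
      linear_combination (C * p * G1 * b * q) * e1 + (C * b ^ 2 * q ^ 2 * G2) * e2 +
        (C * b * q ^ 2 * x ^ p) * ho - (C * b * q * x ^ p * G1) * h2p
  refine ⟨fun x hx => (d1 x hx.1).differentiableAt, fun x hx => d2 x hx.1,
    fun x hx => (d3 x hx.1).differentiableAt, fun x hx => ?_⟩
  have hx0 := hx.1
  rw [(d3 x hx0).deriv, form x hx0]
  have e : x ^ (p - 2 + α) = x ^ p / x ^ q := by
    rw [← Real.rpow_sub hx0]; congr 1; rw [hqd]; ring
  rw [e, hb]
  ring
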